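/- Let Φ be a crystallographic root system in a finite-dimensional real inner product space V with base Δ and Weyl group W, and let S, T ⊆ Δ. For every c > 0 there exists c' > 0 with the following property: for every w ∈ W with w ≠ 1 such that wα is a positive root for every α ∈ S and span(T) ⊆ w(span(S)), and for every λ ∈ V orthogonal to every element of S and satisfying ⟨λ, β^∨⟩ > c' for all β ∈ Δ ∖ S, there exists β ∈ Δ ∖ T such that ⟨wλ, β^∨⟩ < −c. -/

import Mathlib

open scoped RealInnerProductSpace

/-- The Weyl group of `Φ`: the subgroup of the orthogonal group (realized as linear
isometry equivalences) generated by the reflections in the roots. -/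
noncomputable def weylGroup (V : Type*) [NormedAddCommGroup V] [InnerProductSpace ℝ V]
    (Φ : Set V) : Subgroup (V ≃ₗᵢ[ℝ] V) :=
  Subgroup.closure {g | ∃ α ∈ Φ, ∀ x : V, g x = x - (2 * ⟪x, α⟫ / ⟪α, α⟫) • α}

/-- A positive root: a root all of whose coefficients with respect to the base `Δ`
are nonnegative integers. -/
def isPositiveRoot {V : Type*} [NormedAddCommGroup V] [InnerProductSpace ℝ V]
    (Φ : Set V) (Δ : Finset V) (x : V) : Prop :=
  x ∈ Φ ∧ ∃ c : V → ℤ, x = ∑ v ∈ Δ, (c v : ℝ) • v ∧ ∀ v ∈ Δ, 0 ≤ c v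

namespace FarAway

variable {V : Type*} [NormedAddCommGroup V] [InnerProductSpace ℝ V]

/-- the reflection in `a` -/
noncomputable def s [FiniteDimensional ℝ V] (a : V) : V ≃ₗᵢ[ℝ] V := (ℝ ∙ a)ᗮ.reflection

variable [FiniteDimensional ℝ V]

lemma s_apply (a x : V) : s a x = x - (2 * ⟪x, a⟫ / ⟪a, a⟫) • a := by
  rw [s, Submodule.reflection_orthogonal_apply, Submodule.reflection_singleton_apply,
    real_inner_self_eq_norm_sq, real_inner_comm]
  simp only [RCLike.ofReal_real_eq_id, id_eq, neg_sub, two_smul, mul_div_assoc]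
  rw [two_mul, add_smul]

lemma s_self {a : V} (ha : a ≠ 0) : s a a = -a := by
  have h : ⟪a, a⟫ ≠ 0 := by simpa using ha
  rw [s_apply, mul_div_assoc, div_self h, mul_one, two_smul]; abel

lemma s_mul_self (a : V) : s a * s a = 1 := by
  ext x
  simp [s]

lemma s_inv (a : V) : (s a)⁻¹ = s a := inv_eq_of_mul_eq_one_left (s_mul_self a)

lemma s_smul {r : ℝ} (hr : r ≠ 0) (a : V) : s (r • a) = s a := by
  ext x
  rw [s_apply, s_apply, smul_smul, inner_smul_right, inner_smul_left, inner_smul_right]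
  congr 2
  simp only [conj_trivial]
  by_cases h : ⟪a, a⟫ = 0
  · rw [h]; simp
  · field_simp

lemma s_conj (g : V ≃ₗᵢ[ℝ] V) (a : V) : g * s a = s (g a) * g := by
  ext x
  simp [s_apply]

/-- working data: root system with coordinates relative to the base -/
structure RS (Φ : Set V) (Δ : Finset V) (f : V → V →ₗ[ℝ] ℝ) : Prop where
  fin : Φ.Finite
  ne : ∀ γ ∈ Φ, γ ≠ 0
  sub : ∀ γ ∈ Δ, γ ∈ Φ
  refl : ∀ α ∈ Φ, ∀ β ∈ Φ, s α β ∈ Φ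
  coord : ∀ γ ∈ Φ, γ = ∑ v ∈ Δ, f v γ • v
  self : ∀ v ∈ Δ, f v v = 1
  off : ∀ v ∈ Δ, ∀ u ∈ Δ, u ≠ v → f v u = 0
  sign : ∀ γ ∈ Φ, (∀ v ∈ Δ, 0 ≤ f v γ) ∨ (∀ v ∈ Δ, f v γ ≤ 0)

variable {Φ : Set V} {Δ : Finset V} {f : V → V →ₗ[ℝ] ℝ}

lemma pos_refl (h : RS Φ Δ f) {a γ : V} (ha : a ∈ Δ) (hγ : γ ∈ Φ) (hp : ∀ v ∈ Δ, 0 ≤ f v γ)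
    (hn : ¬ ∀ v ∈ Δ, 0 ≤ f v (s a γ)) : ∃ r : ℝ, r ≠ 0 ∧ γ = r • a := by
  have h1 := (h.sign _ (h.refl a (h.sub a ha) γ hγ)).resolve_left hn
  have h2 : ∀ v ∈ Δ, v ≠ a → f v γ = 0 := by
    intro v hv hva
    have := h1 v hv
    rw [s_apply, map_sub, map_smul, h.off v hv a ha hva.symm] at this
    have h3 := hp v hv
    simp at this
    linarith
  have h4 : γ = f a γ • a := by
    conv_lhs => rw [h.coord γ hγ]
    apply Finset.sum_eq_single_of_mem a ha
    intro v hv hva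
    rw [h2 v hv hva, zero_smul]
  refine ⟨f a γ, ?_, h4⟩
  intro h0
  rw [h0, zero_smul] at h4
  exact h.ne γ hγ h4

lemma not_both (h : RS Φ Δ f) {γ : V} (hγ : γ ∈ Φ) (hp : ∀ v ∈ Δ, 0 ≤ f v γ)
    (hn : ∀ v ∈ Δ, f v γ ≤ 0) : False := by
  apply h.ne γ hγ
  rw [h.coord γ hγ]
  exact Finset.sum_eq_zero fun v hv => by rw [le_antisymm (hn v hv) (hp v hv), zero_smul]

/-- Reflections in positive roots lie in the group generated by simple reflections. -/
lemma gen_pos (h : RS Φ Δ f) (γ : V) (hγ : γ ∈ Φ) (hp : ∀ v ∈ Δ, 0 ≤ f v γ) :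
    s γ ∈ Subgroup.closure (s '' (Δ : Set V)) := by
  by_contra hbad
  let B : Set V := {γ | γ ∈ Φ ∧ (∀ v ∈ Δ, 0 ≤ f v γ) ∧ s γ ∉ Subgroup.closure (s '' (Δ : Set V))}
  have hB : B.Finite := h.fin.subset fun x hx => hx.1
  obtain ⟨m, ⟨hm, hmp, hmb⟩, hmin⟩ := hB.exists_minimalFor (fun x => ∑ v ∈ Δ, f v x) B ⟨γ, hγ, hp, hbad⟩
  have hpos : 0 < ∑ v ∈ Δ, f v m * ⟪m, v⟫ := by
    have h1 : ⟪m, m⟫ = ∑ v ∈ Δ, f v m * ⟪m, v⟫ := by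
      conv_lhs => rw [h.coord m hm]
      rw [← h.coord m hm]
      conv_lhs => enter [3]; rw [h.coord m hm]
      rw [inner_sum]
      simp [inner_smul_right]
    rw [← h1]
    exact real_inner_self_pos.2 (h.ne m hm)
  obtain ⟨b, hb, hbp⟩ := Finset.exists_lt_of_sum_lt (s := Δ) (f := fun _ => (0 : ℝ)) (by simpa using hpos)
  have hbm : 0 < ⟪m, b⟫ := by
    by_contra hc
    have := mul_nonpos_of_nonneg_of_nonpos (hmp b hb) (not_lt.1 hc)
    linarith
  have hsb : s b ∈ Subgroup.closure (s '' (Δ : Set V)) := Subgroup.subset_closure ⟨b, hb, rfl⟩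
  by_cases hq : ∀ v ∈ Δ, 0 ≤ f v (s b m)
  · have hin : s (s b m) ∈ Subgroup.closure (s '' (Δ : Set V)) := by
      by_contra hnot
      have hle := hmin (j := s b m) ⟨h.refl b (h.sub b hb) m hm, hq, hnot⟩
      have hb0 : 0 < ⟪b, b⟫ := real_inner_self_pos.2 (h.ne b (h.sub b hb))
      have hk : 0 < 2 * ⟪m, b⟫ / ⟪b, b⟫ := by positivity
      have hsum : ∑ v ∈ Δ, f v (s b m) = ∑ v ∈ Δ, f v m - 2 * ⟪m, b⟫ / ⟪b, b⟫ := by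
        have : ∑ v ∈ Δ, f v b = 1 := by
          rw [Finset.sum_eq_single_of_mem b hb, h.self b hb]
          intro v hv hvb
          exact h.off v hv b hb hvb.symm
        simp only [s_apply, map_sub, map_smul, Finset.sum_sub_distrib, smul_eq_mul]
        rw [← Finset.mul_sum, this, mul_one]
      simp only [hsum] at hle
      have := hle (by linarith)
      linarith
    apply hmb
    have : s m = s b * s (s b m) * s b := by
      rw [mul_assoc, ← s_conj, ← mul_assoc, s_mul_self, one_mul]
    rw [this]
    exact mul_mem (mul_mem hsb hin) hsb
  · obtain ⟨r, hr, hmr⟩ := pos_refl h hb hm hmp hq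
    apply hmb
    rw [hmr, s_smul hr]
    exact hsb

lemma gen (h : RS Φ Δ f) (γ : V) (hγ : γ ∈ Φ) :
    s γ ∈ Subgroup.closure (s '' (Δ : Set V)) := by
  rcases h.sign γ hγ with hp | hn
  · exact gen_pos h γ hγ hp
  · have h1 : s γ γ ∈ Φ := h.refl γ hγ γ hγ
    rw [s_self (h.ne γ hγ)] at h1
    have := gen_pos h (-γ) h1 (fun v hv => by simpa using hn v hv)
    rwa [← neg_one_smul ℝ γ, s_smul (by norm_num)] at this

lemma exists_list {g : V ≃ₗᵢ[ℝ] V} (hg : g ∈ Subgroup.closure (s '' (Δ : Set V))) :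
    ∃ l : List V, (∀ a ∈ l, a ∈ Δ) ∧ g = (l.map s).prod := by
  induction hg using Subgroup.closure_induction with
  | mem x hx =>
    obtain ⟨a, ha, rfl⟩ := hx
    exact ⟨[a], by simpa using ha, by simp⟩
  | one => exact ⟨[], by simp, by simp⟩
  | mul x y _ _ hx hy =>
    obtain ⟨l, hl, rfl⟩ := hx
    obtain ⟨l', hl', rfl⟩ := hy
    refine ⟨l ++ l', ?_, by simp⟩
    intro a ha
    rcases List.mem_append.1 ha with ha | ha
    exacts [hl a ha, hl' a ha]
  | inv x _ hx =>
    obtain ⟨l, hl, rfl⟩ := hx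
    refine ⟨l.reverse, fun a ha => hl a (List.mem_reverse.1 ha), ?_⟩
    rw [List.prod_inv_reverse, List.map_map, List.map_reverse]
    congr 2

lemma list_mem (h : RS Φ Δ f) (l : List V) (hl : ∀ a ∈ l, a ∈ Δ) {γ : V} (hγ : γ ∈ Φ) :
    (l.map s).prod γ ∈ Φ := by
  induction l with
  | nil => simpa using hγ
  | cons a l ih =>
    simp only [List.map_cons, List.prod_cons, LinearIsometryEquiv.coe_mul, Function.comp_apply]
    exact h.refl a (h.sub a (hl a (by simp))) _ (ih fun b hb => hl b (by simp [hb]))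

lemma exchange (h : RS Φ Δ f) {β : V} (hβ : β ∈ Φ) (hp : ∀ v ∈ Δ, 0 ≤ f v β)
    (l : List V) (hl : ∀ a ∈ l, a ∈ Δ)
    (hn : ¬ ∀ v ∈ Δ, 0 ≤ f v ((l.map s).prod β)) :
    ∃ l' : List V, (∀ a ∈ l', a ∈ Δ) ∧ l'.length + 1 = l.length ∧
      (l.map s).prod * s β = (l'.map s).prod := by
  induction l with
  | nil => simp at hn; obtain ⟨v, hv, h1⟩ := hn; have := hp v hv; linarith
  | cons a l ih =>
    have hl' : ∀ b ∈ l, b ∈ Δ := fun b hb => hl b (by simp [hb])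
    have ha : a ∈ Δ := hl a (by simp)
    by_cases hq : ∀ v ∈ Δ, 0 ≤ f v ((l.map s).prod β)
    · refine ⟨l, hl', by simp, ?_⟩
      obtain ⟨r, hr, e⟩ := pos_refl h ha (list_mem h l hl' hβ) hq (by simpa using hn)
      rw [List.map_cons, List.prod_cons, mul_assoc, s_conj, e, s_smul hr, ← mul_assoc, s_mul_self,
        one_mul]
    · obtain ⟨l', h1, h2, h3⟩ := ih hl' hq
      refine ⟨a :: l', ?_, by simp [h2], ?_⟩
      · intro b hb
        rcases List.mem_cons.1 hb with rfl | hb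
        exacts [ha, h1 b hb]
      · rw [List.map_cons, List.prod_cons, mul_assoc, h3]; simp

lemma list_eq_one (h : RS Φ Δ f) (n : ℕ) : ∀ (l : List V), l.length = n → (∀ a ∈ l, a ∈ Δ) →
    (∀ β ∈ Δ, ∀ v ∈ Δ, 0 ≤ f v ((l.map s).prod β)) → (l.map s).prod = 1 := by
  induction n using Nat.strong_induction_on with
  | _ n ih =>
    intro l hn hl hpos
    rcases List.eq_nil_or_concat l with rfl | ⟨l0, b, rfl⟩
    · simp
    · have hl0 : ∀ a ∈ l0, a ∈ Δ := fun a ha => hl a (by simp [ha])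
      have hb : b ∈ Δ := hl b (by simp)
      have hbΦ := h.sub b hb
      have hbpos : ∀ v ∈ Δ, 0 ≤ f v b := by
        intro v hv
        by_cases e : b = v
        · subst e; rw [h.self b hv]; norm_num
        · rw [h.off v hv b hb e]
      have hneg : ¬ ∀ v ∈ Δ, 0 ≤ f v ((l0.map s).prod b) := by
        intro hc
        apply not_both h (list_mem h l0 hl0 hbΦ) hc
        intro v hv
        have := hpos b hb v hv
        simp [s_self (h.ne b hbΦ)] at this
        exact this
      obtain ⟨l', h1, h2, h3⟩ := exchange h hbΦ hbpos l0 hl0 hneg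
      have e : ((l0 ++ [b]).map s).prod = (l'.map s).prod := by
        rw [← h3]; simp
      simp only [List.concat_eq_append] at *
      rw [e] at hpos ⊢
      refine ih l'.length ?_ l' rfl h1 hpos
      simp at hn
      omega

lemma weyl_le (h : RS Φ Δ f) : weylGroup V Φ ≤ Subgroup.closure (s '' (Δ : Set V)) := by
  rw [weylGroup, Subgroup.closure_le]
  rintro g ⟨a, ha, hg⟩
  have : g = s a := by ext x; rw [hg, s_apply]
  rw [this]
  exact gen h a ha

/-- A nontrivial Weyl group element makes some simple root negative. -/
lemma exists_neg (h : RS Φ Δ f) {w : V ≃ₗᵢ[ℝ] V} (hw : w ∈ weylGroup V Φ) (h1 : w ≠ 1) :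
    ∃ α ∈ Δ, w α ∈ Φ ∧ ∀ v ∈ Δ, f v (w α) ≤ 0 := by
  obtain ⟨l, hl, rfl⟩ := exists_list (weyl_le h hw)
  by_contra hc
  apply h1
  apply list_eq_one h _ l rfl hl
  intro b hb
  by_contra hn
  have hm := list_mem h l hl (h.sub b hb)
  exact hc ⟨b, hb, hm, (h.sign _ hm).resolve_left hn⟩

lemma exists_RS (Φ : Set V) (hfin : Φ.Finite) (h0 : (0 : V) ∉ Φ)
    (hrefl : ∀ α ∈ Φ, ∀ β ∈ Φ, β - (2 * ⟪β, α⟫ / ⟪α, α⟫) • α ∈ Φ)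
    (Δ : Finset V) (hΔΦ : (Δ : Set V) ⊆ Φ)
    (hli : LinearIndependent ℝ (fun x : Δ => (x : V)))
    (hbase : ∀ γ ∈ Φ, ∃ c : V → ℤ,
      γ = ∑ v ∈ Δ, (c v : ℝ) • v ∧ ((∀ v ∈ Δ, 0 ≤ c v) ∨ (∀ v ∈ Δ, c v ≤ 0))) :
    ∃ f : V → V →ₗ[ℝ] ℝ, RS Φ Δ f := by
  classical
  have hex : ∀ v : V, ∃ g : V →ₗ[ℝ] ℝ, ∀ u ∈ Δ, g u = if u = v then 1 else 0 := by
    intro v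
    let b := Module.Basis.span hli
    obtain ⟨g, hg⟩ := LinearMap.exists_extend (b.constr ℝ (fun u : Δ => if (u : V) = v then (1 : ℝ) else 0))
    refine ⟨g, fun u hu => ?_⟩
    have e : ((b ⟨u, hu⟩ : Submodule.span ℝ (Set.range fun x : Δ => (x : V))) : V) = u := by
      simp [b, Module.Basis.span_apply]
    have := congrArg (fun k => k (b ⟨u, hu⟩)) hg
    simp only [LinearMap.comp_apply, Submodule.subtype_apply, Module.Basis.constr_basis, e] at this
    exact this
  choose f hf using hex
  have key : ∀ (c : V → ℤ), ∀ v ∈ Δ, f v (∑ u ∈ Δ, (c u : ℝ) • u) = c v := by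
    intro c v hv
    rw [map_sum, Finset.sum_eq_single_of_mem v hv]
    · simp [hf v v hv]
    · intro u hu huv
      simp [hf v u hu, huv]
  refine ⟨f, hfin, fun γ hγ e => h0 (e ▸ hγ), fun γ hγ => hΔΦ hγ, ?_, ?_, ?_, ?_, ?_⟩
  · intro a ha b hb
    rw [s_apply]; exact hrefl a ha b hb
  · intro γ hγ
    obtain ⟨c, rfl, -⟩ := hbase γ hγ
    exact Finset.sum_congr rfl fun v hv => by rw [key c v hv]
  · intro v hv; simp [hf v v hv]
  · intro v hv u hu huv; simp [hf v u hu, huv]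
  · intro γ hγ
    obtain ⟨c, rfl, hc⟩ := hbase γ hγ
    rcases hc with hc | hc
    · left; intro v hv; rw [key c v hv]; exact_mod_cast hc v hv
    · right; intro v hv; rw [key c v hv]; exact_mod_cast hc v hv

end FarAway

/-- If `⟨λ, β^∨⟩` is large for all `β ∈ Δ ∖ S` and `λ ⊥ S`, then for `w ≠ 1` as in
Lemma on "far away" Weyl translates, some `⟨wλ, β^∨⟩`, `β ∈ Δ ∖ T`, is very negative. -/
theorem stmt_8 {V : Type*} [NormedAddCommGroup V] [InnerProductSpace ℝ V]
    [FiniteDimensional ℝ V]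
    -- `Φ` is a crystallographic root system
    (Φ : Set V) (hfin : Φ.Finite) (h0 : (0 : V) ∉ Φ)
    (hrefl : ∀ α ∈ Φ, ∀ β ∈ Φ, β - (2 * ⟪β, α⟫ / ⟪α, α⟫) • α ∈ Φ)
    (hcrys : ∀ α ∈ Φ, ∀ β ∈ Φ, ∃ k : ℤ, 2 * ⟪β, α⟫ / ⟪α, α⟫ = (k : ℝ))
    -- with base `Δ`
    (Δ : Finset V) (hΔΦ : (Δ : Set V) ⊆ Φ)
    (hli : LinearIndependent ℝ (fun x : Δ => (x : V)))
    (hbase : ∀ γ ∈ Φ, ∃ c : V → ℤ,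
      γ = ∑ v ∈ Δ, (c v : ℝ) • v ∧ ((∀ v ∈ Δ, 0 ≤ c v) ∨ (∀ v ∈ Δ, c v ≤ 0)))
    (S T : Finset V) (hS : S ⊆ Δ) (hT : T ⊆ Δ)
    (c : ℝ) (hc : 0 < c) :
    ∃ c' : ℝ, 0 < c' ∧
      ∀ w : V ≃ₗᵢ[ℝ] V, w ∈ weylGroup V Φ → w ≠ 1 →
        (∀ α ∈ S, isPositiveRoot Φ Δ (w α)) →
        (Submodule.span ℝ (T : Set V) : Set V) ⊆
          w '' (Submodule.span ℝ (S : Set V) : Set V) →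
        ∀ lam : V, (∀ α ∈ S, ⟪lam, α⟫ = 0) →
          (∀ β ∈ Δ, β ∉ S → c' < 2 * ⟪lam, β⟫ / ⟪β, β⟫) →
          ∃ β ∈ Δ, β ∉ T ∧ 2 * ⟪w lam, β⟫ / ⟪β, β⟫ < -c := by
  obtain ⟨f, h⟩ := FarAway.exists_RS Φ hfin h0 hrefl Δ hΔΦ hli hbase
  set K : ℝ := ∑ γ ∈ hfin.toFinset, ∑ v ∈ Δ, |f v γ| * (c * ⟪v, v⟫ / 2) with hK
  have hinn : ∀ v : V, 0 ≤ ⟪v, v⟫ := fun v => real_inner_self_nonneg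
  have hterm : ∀ γ v : V, 0 ≤ |f v γ| * (c * ⟪v, v⟫ / 2) := fun γ v =>
    mul_nonneg (abs_nonneg _) (div_nonneg (mul_nonneg hc.le (hinn v)) (by norm_num))
  have hK0 : 0 ≤ K := Finset.sum_nonneg fun γ _ => Finset.sum_nonneg fun v _ => hterm γ v
  have hq : ∀ α ∈ Δ, 0 ≤ 2 * K / ⟪α, α⟫ := fun α _ => div_nonneg (by linarith) (hinn α)
  have hq0 := Finset.sum_nonneg hq
  refine ⟨1 + ∑ α ∈ Δ, 2 * K / ⟪α, α⟫, by linarith, ?_⟩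
  intro w hw hw1 hSpos hT' lam hlamS hlam
  obtain ⟨α, hα, hwα, hneg⟩ := FarAway.exists_neg h hw hw1
  have hαS : α ∉ S := by
    intro hm
    obtain ⟨-, d, hd, hd0⟩ := hSpos α hm
    refine FarAway.not_both h hwα (fun v hv => ?_) hneg
    rw [hd, map_sum]
    refine Finset.sum_nonneg fun u hu => ?_
    rw [map_smul, smul_eq_mul]
    refine mul_nonneg (by exact_mod_cast hd0 u hu) ?_
    by_cases e : u = v
    · subst e; rw [h.self u hv]; norm_num
    · rw [h.off v hv u hu e]
  by_contra! hcon
  have hα0 : 0 < ⟪α, α⟫ := real_inner_self_pos.2 (h.ne α (h.sub α hα))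
  have hTz : ∀ β ∈ T, ⟪w lam, β⟫ = 0 := by
    intro β hβ
    obtain ⟨x, hx, rfl⟩ := hT' (Submodule.subset_span hβ)
    rw [LinearIsometryEquiv.inner_map_map]
    have : Submodule.span ℝ (S : Set V) ≤ (innerₛₗ ℝ lam).ker := by
      rw [Submodule.span_le]
      intro y hy
      simpa using hlamS y hy
    simpa using this hx
  have hlow : ∀ β ∈ Δ, -(c * ⟪β, β⟫ / 2) ≤ ⟪w lam, β⟫ := by
    intro β hβ
    have hβ0 : 0 < ⟪β, β⟫ := real_inner_self_pos.2 (h.ne β (h.sub β hβ))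
    by_cases hm : β ∈ T
    · rw [hTz β hm]
      have := mul_pos hc hβ0
      linarith
    · have := hcon β hβ hm
      rw [le_div_iff₀ hβ0] at this
      linarith
  have hle : ⟪lam, α⟫ ≤ K := by
    have e1 : ⟪lam, α⟫ = ∑ v ∈ Δ, f v (w α) * ⟪w lam, v⟫ := by
      rw [← LinearIsometryEquiv.inner_map_map w lam α]
      conv_lhs => rw [h.coord _ hwα]
      rw [inner_sum]
      simp only [inner_smul_right]
    have e2 : ⟪lam, α⟫ ≤ ∑ v ∈ Δ, |f v (w α)| * (c * ⟪v, v⟫ / 2) := by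
      rw [e1]
      refine Finset.sum_le_sum fun v hv => ?_
      rw [abs_of_nonpos (hneg v hv)]
      nlinarith [hneg v hv, hlow v hv]
    refine e2.trans ?_
    exact Finset.single_le_sum (f := fun γ => ∑ v ∈ Δ, |f v γ| * (c * ⟪v, v⟫ / 2))
      (fun γ _ => Finset.sum_nonneg fun v _ => hterm γ v) (hfin.mem_toFinset.2 hwα)
  have h2 := hlam α hα hαS
  have h3 := Finset.single_le_sum hq hα
  have h4 : 2 * ⟪lam, α⟫ / ⟪α, α⟫ ≤ 2 * K / ⟪α, α⟫ := by gcongr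
  linarith
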